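/- arXiv:1204.5491 — 2 statements merged into one kernel-verified Lean document; each statement's English description precedes it below -/
import Mathlib

section
/- Proposition: Let κ ∈ ℕ and, for μ ∈ ℕ, let A_μ := (a_{n,m})_{n,m=0,…,μ} ∈ ℍ^{(μ+1)N×(μ+1)N} denote the Hermitian block matrix whose (n,m) block is a_{n,m}. The following are equivalent: (1) the kernel K(p,q) has κ negative squares in B_ρ; (2) ν₋(A_μ) ≤ κ for every μ ∈ ℕ, and ν₋(A_μ) = κ for at least one μ ∈ ℕ. -/
/- Setting: quaternionic hermitian kernels of the form `K(p,q) = Σ pⁿ a_{n,m} q̄^m`.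
Column vectors `ι → ℍ` form a right `ℍ`-vector space (a module over `ℍᵐᵒᵖ`).  For a
Hermitian matrix `H`, `v* H v = star v ⬝ᵥ H.mulVec v` is real, and the negativity
index `ν₋(H)` is the largest dimension of a right subspace on which the quadratic
form `v ↦ (v* H v).re` is negative definite. -/

open Quaternion MulOpposite Matrix

attribute [local instance] Matrix.normedAddCommGroup

/-- The negativity index `ν₋(H)`: the largest dimension of a right `ℍ`-subspace on
which the Hermitian form of `H` is strictly negative. -/
noncomputable def negIndex {ι : Type*} [Fintype ι] (H : Matrix ι ι ℍ[ℝ]) : ℕ :=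
  sSup {d : ℕ | ∃ W : Submodule ℍ[ℝ]ᵐᵒᵖ (ι → ℍ[ℝ]),
      Module.finrank ℍ[ℝ]ᵐᵒᵖ W = d ∧
      ∀ v ∈ W, v ≠ 0 → (star v ⬝ᵥ H.mulVec v).re < 0}

/-- The kernel `K(p,q) = Σ_{n,m≥0} pⁿ a_{n,m} q̄^m` built from the coefficient
matrices `a_{n,m}`. -/
noncomputable def kerK {N : ℕ} (a : ℕ → ℕ → Matrix (Fin N) (Fin N) ℍ[ℝ])
    (p q : ℍ[ℝ]) : Matrix (Fin N) (Fin N) ℍ[ℝ] :=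
  fun i j => ∑' nm : ℕ × ℕ, p ^ nm.1 * a nm.1 nm.2 i j * (star q) ^ nm.2

/-- The Gram block matrix `G(p₁,…,p_k) = (K(p_i,p_j))_{i,j}` of a kernel `K` at a
finite tuple of points. -/
noncomputable def gram {N k : ℕ} (K : ℍ[ℝ] → ℍ[ℝ] → Matrix (Fin N) (Fin N) ℍ[ℝ])
    (p : Fin k → ℍ[ℝ]) : Matrix (Fin k × Fin N) (Fin k × Fin N) ℍ[ℝ] :=
  fun x y => K (p x.1) (p y.1) x.2 y.2

/-- `K` has `κ` negative squares in the ball `B_r`: all Gram block matrices at tuples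
of points of `B_r` have `ν₋ ≤ κ`, with equality for at least one tuple. -/
noncomputable def hasNegSquares {N : ℕ} (a : ℕ → ℕ → Matrix (Fin N) (Fin N) ℍ[ℝ])
    (r : ℝ) (κ : ℕ) : Prop :=
  (∀ (k : ℕ) (p : Fin k → ℍ[ℝ]), (∀ i, ‖p i‖ < r) → negIndex (gram (kerK a) p) ≤ κ) ∧
  (∃ (k : ℕ) (p : Fin k → ℍ[ℝ]), (∀ i, ‖p i‖ < r) ∧ negIndex (gram (kerK a) p) = κ)

/-- The finite block matrix `A_μ = (a_{n,m})_{n,m=0,…,μ}`. -/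
noncomputable def blockA {N : ℕ} (a : ℕ → ℕ → Matrix (Fin N) (Fin N) ℍ[ℝ]) (μ : ℕ) :
    Matrix (Fin (μ + 1) × Fin N) (Fin (μ + 1) × Fin N) ℍ[ℝ] :=
  fun x y => a x.1 y.1 x.2 y.2

/-!
Write `A` for the infinite block matrix `(a n m)`. The Gram matrix of `K` at `p₁, …, p_k` is the
compression of `A` along the columns `(p̄ⱼⁿ)ₙ`, and `A_μ` is the compression of `A` along the first
`μ + 1` standard columns. The negativity index does not increase under congruence and is lower
semicontinuous. So it suffices to approximate either family of columns, entrywise and with a bound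
`C ρⁿ`, by linear combinations of the other one. Power columns are limits of their truncations.
Conversely, a Vandermonde inverse gives combinations of the power columns at real nodes `t j` which
agree with the standard columns in the first `μ + 1` rows; replacing `t` by `s t` and rescaling
multiplies the entry in row `r` of column `n` by `s ^ (r - n)`, which kills the remaining rows as
`s → 0`.
-/

open Filter Topology
open scoped Kronecker

section NegativityIndex

variable {ι κ : Type*} [Fintype ι] [Fintype κ]

/-- The Hermitian form of `H` is negative definite on the right subspace `W`; `negIndex H` is the
largest dimension of such a `W`. -/
def IsNegDefOn (H : Matrix ι ι ℍ[ℝ]) (W : Submodule ℍ[ℝ]ᵐᵒᵖ (ι → ℍ[ℝ])) : Prop :=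
  ∀ v ∈ W, v ≠ 0 → (star v ⬝ᵥ H *ᵥ v).re < 0

theorem bddAbove_finrank_isNegDefOn (H : Matrix ι ι ℍ[ℝ]) :
    BddAbove {d : ℕ | ∃ W : Submodule ℍ[ℝ]ᵐᵒᵖ (ι → ℍ[ℝ]),
      Module.finrank ℍ[ℝ]ᵐᵒᵖ W = d ∧ IsNegDefOn H W} := by
  have : Module.Finite ℍ[ℝ]ᵐᵒᵖ (ι → ℍ[ℝ]) := .of_restrictScalars_finite ℝ _ _
  refine ⟨Module.finrank ℍ[ℝ]ᵐᵒᵖ (ι → ℍ[ℝ]), ?_⟩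
  rintro _ ⟨W, rfl, -⟩
  exact W.finrank_le

theorem exists_isNegDefOn_finrank_eq_negIndex (H : Matrix ι ι ℍ[ℝ]) :
    ∃ W : Submodule ℍ[ℝ]ᵐᵒᵖ (ι → ℍ[ℝ]),
      Module.finrank ℍ[ℝ]ᵐᵒᵖ W = negIndex H ∧ IsNegDefOn H W :=
  Nat.sSup_mem (s := {d : ℕ | ∃ W : Submodule ℍ[ℝ]ᵐᵒᵖ (ι → ℍ[ℝ]),
      Module.finrank ℍ[ℝ]ᵐᵒᵖ W = d ∧ IsNegDefOn H W})
    ⟨0, ⊥, finrank_bot _ _, fun _ hv hv0 => absurd ((Submodule.mem_bot _).1 hv) hv0⟩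
    (bddAbove_finrank_isNegDefOn H)

theorem IsNegDefOn.finrank_le_negIndex {H : Matrix ι ι ℍ[ℝ]}
    {W : Submodule ℍ[ℝ]ᵐᵒᵖ (ι → ℍ[ℝ])} (hW : IsNegDefOn H W) :
    Module.finrank ℍ[ℝ]ᵐᵒᵖ W ≤ negIndex H :=
  le_csSup (bddAbove_finrank_isNegDefOn H) ⟨W, rfl, hW⟩

theorem star_dotProduct_conjTranspose_mul_mul_mulVec {R : Type*} [Semiring R] [StarRing R]
    (G : Matrix ι ι R) (M : Matrix ι κ R) (v : κ → R) :
    star v ⬝ᵥ (Mᴴ * G * M) *ᵥ v = star (M *ᵥ v) ⬝ᵥ G *ᵥ (M *ᵥ v) := by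
  rw [star_mulVec, ← dotProduct_mulVec, mulVec_mulVec, mulVec_mulVec, Matrix.mul_assoc]

theorem negIndex_conjTranspose_mul_mul_le (G : Matrix ι ι ℍ[ℝ]) (M : Matrix ι κ ℍ[ℝ]) :
    negIndex (Mᴴ * G * M) ≤ negIndex G := by
  obtain ⟨W, hd, hW⟩ := exists_isNegDefOn_finrank_eq_negIndex (Mᴴ * G * M)
  let L : (κ → ℍ[ℝ]) →ₗ[ℍ[ℝ]ᵐᵒᵖ] (ι → ℍ[ℝ]) := mulVecBilin ℍ[ℝ] ℍ[ℝ]ᵐᵒᵖ M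
  have form_neg : ∀ v ∈ W, v ≠ 0 → (star (L v) ⬝ᵥ G *ᵥ (L v)).re < 0 := fun v hv hv0 =>
    (congrArg _ (star_dotProduct_conjTranspose_mul_mul_mulVec G M v)).symm.trans_lt (hW v hv hv0)
  have L_injOn : Function.Injective (L.domRestrict W) := by
    refine (injective_iff_map_eq_zero _).2 fun v hv => by_contra fun hv0 => ?_
    have hneg := form_neg v v.2 fun h => hv0 (Subtype.ext h)
    rw [show L v = 0 from hv] at hneg
    simp at hneg
  have range_negDef : IsNegDefOn G (LinearMap.range (L.domRestrict W)) := by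
    rintro _ ⟨v, rfl⟩ hLv
    exact form_neg v v.2 fun hv => hLv (by simp [hv])
  rw [← hd, ← LinearMap.finrank_range_of_inj L_injOn]
  exact range_negDef.finrank_le_negIndex

theorem re_star_smul_dotProduct_mulVec_smul (H : Matrix ι ι ℍ[ℝ]) (r : ℝ) (v : ι → ℍ[ℝ]) :
    (star (r • v) ⬝ᵥ H *ᵥ (r • v)).re = r ^ 2 * (star v ⬝ᵥ H *ᵥ v).re := by
  have star_smul_eq : star (r • v) = r • star v := funext fun i => Quaternion.star_smul r (v i)
  rw [star_smul_eq, mulVec_smul, smul_dotProduct, dotProduct_smul, smul_smul, ← sq,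
    Quaternion.re_smul, smul_eq_mul]

theorem isNegDefOn_iff_forall_norm_eq_one (H : Matrix ι ι ℍ[ℝ])
    (W : Submodule ℍ[ℝ]ᵐᵒᵖ (ι → ℍ[ℝ])) :
    IsNegDefOn H W ↔ ∀ v ∈ W, ‖v‖ = 1 → (star v ⬝ᵥ H *ᵥ v).re < 0 := by
  refine ⟨fun hW v hv hv1 => hW v hv (norm_ne_zero_iff.1 (by simp [hv1])), fun hW v hv hv0 => ?_⟩
  have unit_neg := hW (‖v‖⁻¹ • v) ((W.restrictScalars ℝ).smul_mem _ hv) (norm_smul_inv_norm hv0)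
  rw [re_star_smul_dotProduct_mulVec_smul] at unit_neg
  exact neg_of_mul_neg_right unit_neg (sq_nonneg _)

-- The unit sphere of `W` is compact, so negativity on it is an open condition on the matrix.
theorem IsNegDefOn.eventually {H : Matrix ι ι ℍ[ℝ]} {W : Submodule ℍ[ℝ]ᵐᵒᵖ (ι → ℍ[ℝ])}
    (hW : IsNegDefOn H W) : ∀ᶠ G in 𝓝 H, IsNegDefOn G W := by
  have sphere_compact : IsCompact ((W : Set (ι → ℍ[ℝ])) ∩ Metric.sphere 0 1) :=
    (isCompact_sphere 0 1).inter_left (W.restrictScalars ℝ).closed_of_finiteDimensional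
  have form_continuous : Continuous fun x : Matrix ι ι ℍ[ℝ] × (ι → ℍ[ℝ]) =>
      (star x.2 ⬝ᵥ x.1 *ᵥ x.2).re :=
    Quaternion.continuous_re.comp
      (continuous_snd.star.dotProduct (continuous_fst.matrix_mulVec continuous_snd))
  have sphere_neg : ∀ᶠ G in 𝓝 H, ∀ v ∈ (W : Set (ι → ℍ[ℝ])) ∩ Metric.sphere 0 1,
      (star v ⬝ᵥ G *ᵥ v).re < 0 := by
    refine sphere_compact.eventually_forall_of_forall_eventually fun v ⟨hv, hv1⟩ => ?_
    exact form_continuous.continuousAt.eventually_lt continuousAt_const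
      (hW v hv (ne_zero_of_mem_unit_sphere ⟨v, hv1⟩))
  filter_upwards [sphere_neg] with G hG
  exact (isNegDefOn_iff_forall_norm_eq_one G W).2 fun v hv hv1 =>
    hG v ⟨hv, mem_sphere_zero_iff_norm.2 hv1⟩

theorem eventually_negIndex_le (H : Matrix ι ι ℍ[ℝ]) :
    ∀ᶠ G in 𝓝 H, negIndex H ≤ negIndex G := by
  obtain ⟨W, hd, hW⟩ := exists_isNegDefOn_finrank_eq_negIndex H
  filter_upwards [hW.eventually] with G hG
  exact hd ▸ hG.finrank_le_negIndex

end NegativityIndex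

section Compression

variable {σ ν ι κ : Type*} [Fintype ν] {a : σ → σ → Matrix ν ν ℍ[ℝ]}

/-- The compression `(U ⊗ 1)* A (U ⊗ 1)` of the possibly infinite block matrix
`A = (a n m)_{n,m}` along the columns of `U`. Both the Gram matrices of `kerK a` and the truncations
`blockA a μ` have this form. Entries whose series diverges are `0`. -/
noncomputable def compression (a : σ → σ → Matrix ν ν ℍ[ℝ]) (U : Matrix σ ι ℍ[ℝ]) :
    Matrix (ι × ν) (ι × ν) ℍ[ℝ] :=
  of fun x y => ∑' nm : σ × σ, star (U nm.1 x.1) * a nm.1 nm.2 x.2 y.2 * U nm.2 y.1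

variable {w : σ → ℝ} {C : ι → ℝ}

theorem norm_compression_term_le {U : Matrix σ ι ℍ[ℝ]} (hU : ∀ n i, ‖U n i‖ ≤ C i * w n)
    (i j : ι) (x y : ν) (n m : σ) :
    ‖star (U n i) * a n m x y * U m j‖ ≤ C i * C j * (‖a n m‖ * (w n * w m)) := by
  have hCw : 0 ≤ C i * w n := (norm_nonneg _).trans (hU n i)
  calc ‖star (U n i) * a n m x y * U m j‖ = ‖U n i‖ * ‖a n m x y‖ * ‖U m j‖ := by
        rw [norm_mul, norm_mul, norm_star]
    _ ≤ (C i * w n) * ‖a n m‖ * (C j * w m) := by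
        gcongr
        exacts [hU n i, norm_entry_le_entrywise_sup_norm _, hU m j]
    _ = C i * C j * (‖a n m‖ * (w n * w m)) := by ring

theorem summable_compression_term
    (hsum : Summable fun nm : σ × σ => ‖a nm.1 nm.2‖ * (w nm.1 * w nm.2))
    {U : Matrix σ ι ℍ[ℝ]} (hU : ∀ n i, ‖U n i‖ ≤ C i * w n) (i j : ι) (x y : ν) :
    Summable fun nm : σ × σ => star (U nm.1 i) * a nm.1 nm.2 x y * U nm.2 j :=
  (hsum.mul_left (C i * C j)).of_norm_bounded fun _ => norm_compression_term_le hU i j x y _ _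

theorem tendsto_compression
    (hsum : Summable fun nm : σ × σ => ‖a nm.1 nm.2‖ * (w nm.1 * w nm.2))
    {α : Type*} {l : Filter α} {U : α → Matrix σ ι ℍ[ℝ]} {V : Matrix σ ι ℍ[ℝ]}
    (hU : ∀ᶠ t in l, ∀ n i, ‖U t n i‖ ≤ C i * w n) (hV : Tendsto U l (𝓝 V)) :
    Tendsto (fun t => compression a (U t)) l (𝓝 (compression a V)) := by
  have entry_tendsto (n : σ) (i : ι) : Tendsto (fun t => U t n i) l (𝓝 (V n i)) :=
    (hV.apply_nhds n).apply_nhds i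
  refine tendsto_pi_nhds.2 fun x => tendsto_pi_nhds.2 fun y => ?_
  refine tendsto_tsum_of_dominated_convergence (hsum.mul_left (C x.1 * C y.1)) (fun nm => ?_) ?_
  · exact ((entry_tendsto _ _).star.mul_const _).mul (entry_tendsto _ _)
  · filter_upwards [hU] with t ht nm
    exact norm_compression_term_le ht ..

variable [Fintype ι]

theorem compression_mul [DecidableEq ν]
    (hsum : Summable fun nm : σ × σ => ‖a nm.1 nm.2‖ * (w nm.1 * w nm.2))
    {U : Matrix σ ι ℍ[ℝ]} (hU : ∀ n i, ‖U n i‖ ≤ C i * w n) (B : Matrix ι κ ℍ[ℝ]) :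
    compression a (U * B) =
      (B ⊗ₖ (1 : Matrix ν ν ℍ[ℝ]))ᴴ * compression a U * B ⊗ₖ (1 : Matrix ν ν ℍ[ℝ]) := by
  ext1 ⟨n, x⟩ ⟨m, y⟩
  have entry_eq : ((B ⊗ₖ (1 : Matrix ν ν ℍ[ℝ]))ᴴ * compression a U *
      B ⊗ₖ (1 : Matrix ν ν ℍ[ℝ]) : Matrix (κ × ν) (κ × ν) ℍ[ℝ]) (n, x) (m, y) =
      ∑ j, ∑ i, star (B i n) * compression a U (i, x) (j, y) * B j m := by
    simp [Matrix.mul_apply, Fintype.sum_prod_type, Matrix.one_apply, Finset.sum_mul, apply_ite star]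
  have entry_hasSum := hasSum_sum fun j (_ : j ∈ Finset.univ) =>
    hasSum_sum fun i (_ : i ∈ Finset.univ) =>
      ((summable_compression_term hsum hU i j x y).hasSum.mul_left (star (B i n))).mul_right (B j m)
  rw [entry_eq]
  refine Eq.trans (tsum_congr fun nm => ?_) entry_hasSum.tsum_eq
  simp only [Matrix.mul_apply, star_sum, star_mul, Finset.sum_mul, Finset.mul_sum, mul_assoc]

theorem negIndex_compression_mul_le [Fintype κ]
    (hsum : Summable fun nm : σ × σ => ‖a nm.1 nm.2‖ * (w nm.1 * w nm.2))
    {U : Matrix σ ι ℍ[ℝ]} (hU : ∀ n i, ‖U n i‖ ≤ C i * w n) (B : Matrix ι κ ℍ[ℝ]) :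
    negIndex (compression a (U * B)) ≤ negIndex (compression a U) := by
  classical
  rw [compression_mul hsum hU B]
  exact negIndex_conjTranspose_mul_mul_le _ _

theorem eventually_negIndex_compression_le
    (hsum : Summable fun nm : σ × σ => ‖a nm.1 nm.2‖ * (w nm.1 * w nm.2))
    {α : Type*} {l : Filter α} {U : α → Matrix σ ι ℍ[ℝ]} {V : Matrix σ ι ℍ[ℝ]}
    (hU : ∀ᶠ t in l, ∀ n i, ‖U t n i‖ ≤ C i * w n) (hV : Tendsto U l (𝓝 V)) :
    ∀ᶠ t in l, negIndex (compression a V) ≤ negIndex (compression a (U t)) :=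
  (tendsto_compression hsum hU hV).eventually (eventually_negIndex_le _)

end Compression

section Columns

/-- The first `k` standard basis columns of an `ℕ`-indexed column space. -/
def stdColumns (R : Type*) [Zero R] [One R] (k : ℕ) : Matrix ℕ (Fin k) R :=
  of fun n j => if n = j then 1 else 0

/-- The Vandermonde matrix with infinitely many rows: its `j`-th column is `(p j ^ n)_n`. -/
def powerColumns {R ι : Type*} [Monoid R] (p : ι → R) : Matrix ℕ ι R :=
  of fun n j => p j ^ n

theorem norm_powerColumns_le {R ι : Type*} [NormedDivisionRing R] {ρ : ℝ} {p : ι → R}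
    (hp : ∀ i, ‖p i‖ ≤ ρ) (n : ℕ) (i : ι) : ‖powerColumns p n i‖ ≤ ρ ^ n := by
  rw [powerColumns, of_apply, norm_pow]
  gcongr
  exact hp i

theorem norm_stdColumns_le {R : Type*} [NormedRing R] [NormOneClass R] {ρ : ℝ} (hρ : 0 < ρ) {k : ℕ}
    (n : ℕ) (j : Fin k) : ‖stdColumns R k n j‖ ≤ (ρ ^ (j : ℕ))⁻¹ * ρ ^ n := by
  rcases eq_or_ne n j with rfl | hnj
  · simp [stdColumns, hρ.ne']
  · rw [stdColumns, of_apply, if_neg hnj, norm_zero]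
    positivity

theorem stdColumns_mul_apply {R ι : Type*} [Semiring R] {k : ℕ} (U : Matrix ℕ ι R) (n : ℕ) (i : ι) :
    (stdColumns R k * U.submatrix (Fin.val : Fin k → ℕ) id) n i = if n < k then U n i else 0 := by
  split_ifs with hn
  · rw [Matrix.mul_apply, Finset.sum_eq_single ⟨n, hn⟩] <;>
      simp +contextual [stdColumns, Fin.ext_iff, eq_comm]
  · rw [Matrix.mul_apply]
    refine Finset.sum_eq_zero fun j _ => ?_
    simp [stdColumns, show n ≠ j by lia]

theorem tendsto_stdColumns_mul {R ι : Type*} [Semiring R] [TopologicalSpace R]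
    (U : Matrix ℕ ι R) :
    Tendsto (fun k => stdColumns R k * U.submatrix (Fin.val : Fin k → ℕ) id) atTop (𝓝 U) := by
  refine tendsto_pi_nhds.2 fun n => tendsto_pi_nhds.2 fun i => ?_
  refine tendsto_const_nhds.congr' ?_
  filter_upwards [eventually_gt_atTop n] with k hk
  rw [stdColumns_mul_apply, if_pos hk]

theorem exists_powerColumns_mul_apply_eq_stdColumns {ρ : ℝ} (hρ : 0 < ρ) (k : ℕ) :
    ∃ (t : Fin k → ℝ) (B : Matrix (Fin k) (Fin k) ℝ),
      (∀ j, |t j| < ρ) ∧ ∀ r < k, ∀ n, (powerColumns t * B) r n = stdColumns ℝ k r n := by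
  let e := (Set.Ioo_infinite hρ).natEmbedding
  let t : Fin k → ℝ := fun j => e j
  have t_injective : Function.Injective t := fun i j hij =>
    Fin.val_injective (e.injective (Subtype.ext hij))
  refine ⟨t, (vandermonde t)ᵀ⁻¹, fun j => ?_, fun r hr n => ?_⟩
  · rw [abs_of_pos (e j).2.1]
    exact (e j).2.2
  · have vandermonde_isUnit : IsUnit (vandermonde t)ᵀ.det := by
      rw [det_transpose]
      exact (det_vandermonde_ne_zero_iff.2 t_injective).isUnit
    have inverse_eq := congrFun₂ (mul_nonsing_inv _ vandermonde_isUnit) ⟨r, hr⟩ n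
    simp only [Matrix.one_apply, Fin.ext_iff] at inverse_eq
    exact inverse_eq

theorem abs_powerColumns_mul_apply_le {ι κ : Type*} [Fintype ι] {ρ : ℝ} {t : ι → ℝ}
    (ht : ∀ j, |t j| ≤ ρ) (B : Matrix ι κ ℝ) (r : ℕ) (n : κ) :
    |(powerColumns t * B) r n| ≤ (∑ j, |B j n|) * ρ ^ r := by
  rw [mul_comm, Finset.mul_sum]
  refine (Finset.abs_sum_le_sum_abs _ _).trans (Finset.sum_le_sum fun j _ => ?_)
  simp only [powerColumns, of_apply, abs_mul, abs_pow]
  gcongr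
  exact ht j

-- For `r < n` both sides vanish, so the truncated subtraction in the exponent is harmless.
theorem powerColumns_smul_mul_apply {ι : Type*} [Fintype ι] {k : ℕ} {t : ι → ℝ}
    {B : Matrix ι (Fin k) ℝ} (hB : ∀ r < k, ∀ n, (powerColumns t * B) r n = stdColumns ℝ k r n)
    {s : ℝ} (hs : s ≠ 0) (r : ℕ) (n : Fin k) :
    (powerColumns (s • t) * (B * diagonal fun m : Fin k => (s ^ (m : ℕ))⁻¹)) r n =
      s ^ (r - n) * (powerColumns t * B) r n := by
  have scale : (powerColumns (s • t) * (B * diagonal fun m : Fin k => (s ^ (m : ℕ))⁻¹)) r n =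
      s ^ r * (s ^ (n : ℕ))⁻¹ * (powerColumns t * B) r n := by
    rw [← Matrix.mul_assoc, mul_diagonal]
    simp only [Matrix.mul_apply, powerColumns, of_apply, Pi.smul_apply, smul_eq_mul, mul_pow,
      Finset.mul_sum, Finset.sum_mul]
    exact Finset.sum_congr rfl fun j _ => by ring
  rw [scale]
  rcases le_or_gt (n : ℕ) r with hnr | hrn
  · rw [pow_sub₀ s hs hnr]
  · have entry_zero : (powerColumns t * B) r n = 0 := by
      rw [hB r (hrn.trans n.isLt), stdColumns, of_apply, if_neg hrn.ne]
    rw [entry_zero, mul_zero, mul_zero]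

theorem tendsto_pow_sub_mul_powerColumns_mul {ι : Type*} [Fintype ι] {k : ℕ} {t : ι → ℝ}
    {B : Matrix ι (Fin k) ℝ} (hB : ∀ r < k, ∀ n, (powerColumns t * B) r n = stdColumns ℝ k r n) :
    Tendsto (fun s : ℝ => of fun (r : ℕ) (n : Fin k) => s ^ (r - n) * (powerColumns t * B) r n)
      (𝓝 0) (𝓝 (stdColumns ℝ k)) := by
  refine tendsto_pi_nhds.2 fun r => tendsto_pi_nhds.2 fun n => ?_
  have limit_eq : stdColumns ℝ k r n = 0 ^ (r - n) * (powerColumns t * B) r n := by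
    rcases lt_or_ge r k with hrk | hrk
    · rw [hB r hrk]
      by_cases hrn : r = n <;> simp [stdColumns, hrn]
    · have hnr : (n : ℕ) < r := n.isLt.trans_le hrk
      simp [stdColumns, hnr.ne', zero_pow (Nat.sub_ne_zero_of_lt hnr)]
  rw [limit_eq]
  exact (by fun_prop : Continuous fun s : ℝ => s ^ (r - n) * (powerColumns t * B) r n).tendsto 0

theorem exists_powerColumns_mul_tendsto_stdColumns {ρ : ℝ} (hρ : 0 < ρ) (k : ℕ) :
    ∃ (t : ℝ → Fin k → ℝ) (B : ℝ → Matrix (Fin k) (Fin k) ℝ) (C : Fin k → ℝ),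
      (∀ᶠ s in 𝓝[>] 0, ∀ j, |t s j| < ρ) ∧
      (∀ᶠ s in 𝓝[>] 0, ∀ r n, |(powerColumns (t s) * B s) r n| ≤ C n * ρ ^ r) ∧
      Tendsto (fun s => powerColumns (t s) * B s) (𝓝[>] 0) (𝓝 (stdColumns ℝ k)) := by
  obtain ⟨t, B, ht, hB⟩ := exists_powerColumns_mul_apply_eq_stdColumns hρ k
  have unit_interval : ∀ᶠ s : ℝ in 𝓝[>] 0, s ∈ Set.Ioo (0 : ℝ) 1 := Ioo_mem_nhdsGT one_pos
  refine ⟨fun s => s • t, fun s => B * diagonal fun n : Fin k => (s ^ (n : ℕ))⁻¹,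
    fun n => ∑ j, |B j n|, ?_, ?_, ?_⟩
  · filter_upwards [unit_interval] with s ⟨hs0, hs1⟩ j
    rw [Pi.smul_apply, smul_eq_mul, abs_mul, abs_of_pos hs0]
    exact (mul_le_of_le_one_left (abs_nonneg _) hs1.le).trans_lt (ht j)
  · filter_upwards [unit_interval] with s ⟨hs0, hs1⟩ r n
    rw [powerColumns_smul_mul_apply hB hs0.ne', abs_mul, abs_of_pos (pow_pos hs0 _)]
    exact (mul_le_of_le_one_left (abs_nonneg _) (pow_le_one₀ hs0.le hs1.le)).trans
      (abs_powerColumns_mul_apply_le (fun j => (ht j).le) B r n)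
  · refine ((tendsto_pow_sub_mul_powerColumns_mul hB).mono_left nhdsWithin_le_nhds).congr' ?_
    filter_upwards [self_mem_nhdsWithin] with s hs
    ext r n
    exact (powerColumns_smul_mul_apply hB (ne_of_gt hs) r n).symm

end Columns

section Kernel

variable {N : ℕ} (a : ℕ → ℕ → Matrix (Fin N) (Fin N) ℍ[ℝ])

theorem gram_kerK_eq_compression {k : ℕ} (p : Fin k → ℍ[ℝ]) :
    gram (kerK a) p = compression a (powerColumns (star p)) := by
  ext1 x y
  simp [_root_.gram, kerK, compression, powerColumns]

theorem blockA_eq_compression (μ : ℕ) :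
    blockA a μ = compression a (stdColumns ℍ[ℝ] (μ + 1)) := by
  ext1 ⟨n, x⟩ ⟨m, y⟩
  rw [compression, of_apply, tsum_eq_single ((n : ℕ), (m : ℕ))]
  · simp [blockA, stdColumns]
  · rintro ⟨r, s⟩ hrs
    by_cases hr : r = n
    · have hs : s ≠ m := fun hs => hrs (Prod.ext hr hs)
      simp [stdColumns, hs]
    · simp [stdColumns, hr]

variable {a} {ρ : ℝ}

theorem exists_negIndex_gram_le_blockA (hρ : 0 < ρ)
    (hsum : Summable fun nm : ℕ × ℕ => ‖a nm.1 nm.2‖ * (ρ ^ nm.1 * ρ ^ nm.2))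
    {k : ℕ} (p : Fin k → ℍ[ℝ]) (hp : ∀ i, ‖p i‖ < ρ) :
    ∃ μ, negIndex (gram (kerK a) p) ≤ negIndex (blockA a μ) := by
  let V : Matrix ℕ (Fin k) ℍ[ℝ] := powerColumns (star p)
  have V_bound : ∀ n i, ‖V n i‖ ≤ ρ ^ n :=
    norm_powerColumns_le fun i => (Quaternion.norm_star (p i)).trans_le (hp i).le
  have truncation_bound (μ n : ℕ) (i : Fin k) :
      ‖(stdColumns ℍ[ℝ] μ * V.submatrix (Fin.val : Fin μ → ℕ) id) n i‖ ≤ 1 * ρ ^ n := by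
    rw [stdColumns_mul_apply, one_mul]
    split_ifs
    · exact V_bound n i
    · rw [norm_zero]
      positivity
  obtain ⟨μ, hμ⟩ := ((tendsto_add_atTop_nat 1).eventually (eventually_negIndex_compression_le hsum
    (.of_forall truncation_bound) (tendsto_stdColumns_mul V))).exists
  refine ⟨μ, ?_⟩
  rw [gram_kerK_eq_compression, blockA_eq_compression]
  exact hμ.trans (negIndex_compression_mul_le hsum (norm_stdColumns_le hρ) _)

theorem exists_negIndex_blockA_le_gram (hρ : 0 < ρ)
    (hsum : Summable fun nm : ℕ × ℕ => ‖a nm.1 nm.2‖ * (ρ ^ nm.1 * ρ ^ nm.2)) (μ : ℕ) :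
    ∃ p : Fin (μ + 1) → ℍ[ℝ], (∀ i, ‖p i‖ < ρ) ∧
      negIndex (blockA a μ) ≤ negIndex (gram (kerK a) p) := by
  obtain ⟨t, B, C, ht, tB_bound, tB_tendsto⟩ :=
    exists_powerColumns_mul_tendsto_stdColumns hρ (μ + 1)
  let ofReal := algebraMap ℝ ℍ[ℝ]
  have map_tendsto : Tendsto (fun s => (powerColumns (t s) * B s).map ofReal) (𝓝[>] 0)
      (𝓝 (stdColumns ℍ[ℝ] (μ + 1))) := by
    have map_stdColumns : (stdColumns ℝ (μ + 1)).map ofReal = stdColumns ℍ[ℝ] (μ + 1) := by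
      ext1 n j
      simp [stdColumns, apply_ite ofReal]
    rw [← map_stdColumns]
    exact ((continuous_id.matrix_map Quaternion.continuous_coe).tendsto _).comp tB_tendsto
  have map_bound : ∀ᶠ s in 𝓝[>] 0, ∀ n j,
      ‖(powerColumns (t s) * B s).map ofReal n j‖ ≤ C j * ρ ^ n := by
    filter_upwards [tB_bound] with s hs n j
    simpa only [map_apply, ofReal, norm_algebraMap', Real.norm_eq_abs] using hs n j
  obtain ⟨s, hs, hts⟩ :=
    ((eventually_negIndex_compression_le hsum map_bound map_tendsto).and ht).exists
  let p : Fin (μ + 1) → ℍ[ℝ] := fun j => t s j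
  have p_lt : ∀ j, ‖p j‖ < ρ := fun j => by
    simpa only [p, Quaternion.norm_coe, Real.norm_eq_abs] using hts j
  have map_powerColumns : (powerColumns (t s)).map ofReal = powerColumns (star p) := by
    ext1 n j
    simp [powerColumns, p, ofReal]
  have p_bound (n : ℕ) (j : Fin (μ + 1)) : ‖(powerColumns (t s)).map ofReal n j‖ ≤ 1 * ρ ^ n := by
    rw [map_powerColumns, one_mul]
    exact norm_powerColumns_le (fun i => (Quaternion.norm_star (p i)).trans_le (p_lt i).le) n j
  refine ⟨p, p_lt, ?_⟩
  rw [blockA_eq_compression, gram_kerK_eq_compression, ← map_powerColumns]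
  rw [Matrix.map_mul] at hs
  exact hs.trans (negIndex_compression_mul_le hsum p_bound _)

end Kernel

theorem negSquares_iff_blockMatrices_general {N : ℕ}
    (a : ℕ → ℕ → Matrix (Fin N) (Fin N) ℍ[ℝ]) (ρ : ℝ) (hρ : 0 < ρ)
    (hsum : Summable fun nm : ℕ × ℕ => ‖a nm.1 nm.2‖ * ρ ^ (nm.1 + nm.2)) (κ : ℕ) :
    hasNegSquares a ρ κ ↔
      ((∀ μ : ℕ, negIndex (blockA a μ) ≤ κ) ∧ ∃ μ : ℕ, negIndex (blockA a μ) = κ) := by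
  simp only [pow_add] at hsum
  constructor
  · rintro ⟨gram_le, k, p, hp, rfl⟩
    have block_le (μ : ℕ) : negIndex (blockA a μ) ≤ negIndex (gram (kerK a) p) := by
      obtain ⟨q, hq, hle⟩ := exists_negIndex_blockA_le_gram hρ hsum μ
      exact hle.trans (gram_le _ q hq)
    obtain ⟨μ, hμ⟩ := exists_negIndex_gram_le_blockA hρ hsum p hp
    exact ⟨block_le, μ, (block_le μ).antisymm hμ⟩
  · rintro ⟨block_le, μ, rfl⟩
    have gram_le (k : ℕ) (p : Fin k → ℍ[ℝ]) (hp : ∀ i, ‖p i‖ < ρ) :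
        negIndex (gram (kerK a) p) ≤ negIndex (blockA a μ) := by
      obtain ⟨μ', hle⟩ := exists_negIndex_gram_le_blockA hρ hsum p hp
      exact hle.trans (block_le μ')
    obtain ⟨p, hp, hμ⟩ := exists_negIndex_blockA_le_gram hρ hsum μ
    exact ⟨gram_le, _, p, hp, (gram_le _ p hp).antisymm hμ⟩

/-- **Proposition**: for a Hermitian kernel `K(p,q) = Σ pⁿ a_{n,m} q̄^m` converging on
the ball `B_ρ`, `K` has `κ` negative squares in `B_ρ` if and only if all the finite
block matrices `A_μ = (a_{n,m})_{n,m≤μ}` satisfy `ν₋(A_μ) ≤ κ`, with equality for at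
least one `μ`. -/
theorem negSquares_iff_blockMatrices {N : ℕ} (a : ℕ → ℕ → Matrix (Fin N) (Fin N) ℍ[ℝ])
    (ha : ∀ n m, a n m = (a m n)ᴴ) (ρ : ℝ) (hρ : 0 < ρ)
    (hsum : Summable fun nm : ℕ × ℕ => ‖a nm.1 nm.2‖ * ρ ^ (nm.1 + nm.2))
    (κ : ℕ) :
    hasNegSquares a ρ κ ↔
      ((∀ μ : ℕ, negIndex (blockA a μ) ≤ κ) ∧ ∃ μ : ℕ, negIndex (blockA a μ) = κ) :=
  negSquares_iff_blockMatrices_general a ρ hρ hsum κ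
end

section
/- Proposition: Let σ ∈ ℍ^{N×N} be a signature matrix (σ = σ* = σ⁻¹), and let A ∈ ℍ^{M×M} and C ∈ ℍ^{N×M} be such that ⋂_{k≥0} ker(CA^k) = {0} (kernels taken as right-linear maps ℍ^M → ℍ^N). Let P ∈ ℍ^{M×M} be an invertible Hermitian solution of the Stein equation P − A*PA = C*σC. Then there exist matrices B ∈ ℍ^{M×N} and D ∈ ℍ^{N×N} such that the block matrix W := [[A, B], [C, D]] ∈ ℍ^{(M+N)×(M+N)} satisfies W* · diag(P, σ) · W = diag(P, σ), or equivalently W · diag(P⁻¹, σ) · W* = diag(P⁻¹, σ). -/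
/- Setting: quaternionic matrices, with `ᴴ` the conjugate transpose; column vectors are
right `ℍ`-vector spaces and matrices act on the left via `mulVec`.  A signature matrix
`σ` satisfies `σ = σᴴ = σ⁻¹`; `Matrix.fromBlocks` builds 2×2 block matrices, and
`fromBlocks P 0 0 σ` is the block diagonal matrix `diag(P, σ)`. -/

open Quaternion Matrix

/-!
The matrix `V = [[A], [C]]` has the same Gram matrix `P` for the Hermitian form `J = diag(P, σ)` as
`F = [[T], [0]]`, whenever `T` preserves `P`. If moreover `(V - F)ᴴ * J * F = (A - T)ᴴ * P * T` is
invertible, then a rank-`M` perturbation of the identity, a generalized reflection along `V - F`,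
preserves `J` and sends `F` to `V`; composed with `diag(T, 1)` it is the completion `W`. So all that
is needed is an isometry `T` of `P` for which `A - T` is invertible. For `1 × 1` matrices one of the
signs `T = ±1` does; in general, split off an anisotropic vector of `P` and choose `T` block by
block, so that successive Schur complements of `A - T` are invertible.
-/

-- Mathlib has the Schur complement lemmas below for commutative rings only.
section BlockMatrices

variable {R m n : Type*} [Ring R] [Fintype m] [DecidableEq m] [Fintype n] [DecidableEq n]

theorem isUnit_fromBlocks_one_zero₂₁ (B : Matrix m n R) :
    IsUnit (fromBlocks 1 B 0 1 : Matrix (m ⊕ n) (m ⊕ n) R) :=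
  isUnit_iff_exists.mpr ⟨fromBlocks 1 (-B) 0 1, by simp [fromBlocks_multiply],
    by simp [fromBlocks_multiply]⟩

theorem isUnit_fromBlocks_one_zero₁₂ (C : Matrix n m R) :
    IsUnit (fromBlocks 1 0 C 1 : Matrix (m ⊕ n) (m ⊕ n) R) :=
  isUnit_iff_exists.mpr ⟨fromBlocks 1 0 (-C) 1, by simp [fromBlocks_multiply],
    by simp [fromBlocks_multiply]⟩

theorem isUnit_fromBlocks_diagonal {A : Matrix m m R} {D : Matrix n n R} (hA : IsUnit A)
    (hD : IsUnit D) : IsUnit (fromBlocks A 0 0 D) := by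
  obtain ⟨A', hAA', hA'A⟩ := isUnit_iff_exists.mp hA
  obtain ⟨D', hDD', hD'D⟩ := isUnit_iff_exists.mp hD
  exact isUnit_iff_exists.mpr ⟨fromBlocks A' 0 0 D', by simp [fromBlocks_multiply, hAA', hDD'],
    by simp [fromBlocks_multiply, hA'A, hD'D]⟩

theorem fromBlocks_eq_mul_schurComplement_mul (A : Matrix m m R) [Invertible A] (B : Matrix m n R)
    (C : Matrix n m R) (D : Matrix n n R) :
    fromBlocks A B C D =
      fromBlocks 1 0 (C * ⅟A) 1 * fromBlocks A 0 0 (D - C * ⅟A * B) *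
        fromBlocks 1 (⅟A * B) 0 1 := by
  simp [fromBlocks_multiply, Matrix.mul_assoc, Matrix.mul_invOf_cancel_left]

theorem isUnit_fromBlocks_of_isUnit_schurComplement {A : Matrix m m R} [Invertible A]
    {B : Matrix m n R} {C : Matrix n m R} {D : Matrix n n R} (h : IsUnit (D - C * ⅟A * B)) :
    IsUnit (fromBlocks A B C D) := by
  rw [fromBlocks_eq_mul_schurComplement_mul]
  exact ((isUnit_fromBlocks_one_zero₁₂ _).mul
    (isUnit_fromBlocks_diagonal (isUnit_of_invertible A) h)).mul (isUnit_fromBlocks_one_zero₂₁ _)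

end BlockMatrices

theorem isUnit_of_apply_self_ne_zero {K n : Type*} [DivisionRing K] [Fintype n] [DecidableEq n]
    [Subsingleton n] {A : Matrix n n K} (hA : ∀ i, A i i ≠ 0) : IsUnit A := by
  rw [← (isDiag_of_subsingleton A).diagonal_diag]
  exact (Pi.isUnit_iff.mpr fun i => (hA i).isUnit).map (diagonalRingHom n K)

theorem isHermitian_invOf {R n : Type*} [Ring R] [StarRing R] [Fintype n] [DecidableEq n]
    {A : Matrix n n R} [Invertible A] (hA : A.IsHermitian) : (⅟A).IsHermitian := by
  let : Invertible Aᴴ := hA.eq.symm ▸ ‹Invertible A›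
  rw [IsHermitian, conjTranspose_invOf, invOf_inj, hA.eq]

/-- `T` is an isometry of the (possibly degenerate) sesquilinear form with Gram matrix `P`. -/
def PreservesForm {R n : Type*} [Ring R] [StarRing R] [Fintype n] (P T : Matrix n n R) : Prop :=
  Tᴴ * P * T = P

namespace PreservesForm

variable {R m n : Type*} [Ring R] [StarRing R] [Fintype m] [Fintype n] {P S T : Matrix n n R}

theorem mul (hS : PreservesForm P S) (hT : PreservesForm P T) : PreservesForm P (S * T) :=
  calc (S * T)ᴴ * P * (S * T) = Tᴴ * (Sᴴ * P * S) * T := by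
        simp only [conjTranspose_mul, Matrix.mul_assoc]
    _ = P := by rw [hS, hT]

theorem fromBlocks {Q U : Matrix m m R} (hT : PreservesForm P T) (hU : PreservesForm Q U) :
    PreservesForm (fromBlocks P 0 0 Q) (fromBlocks T 0 0 U) := by
  rw [PreservesForm] at hT hU ⊢
  simp [fromBlocks_conjTranspose, fromBlocks_multiply, hT, hU]

theorem of_submatrix {e : m ≃ n} {T : Matrix m m R} (h : PreservesForm (P.submatrix e e) T) :
    PreservesForm P (T.submatrix e.symm e.symm) := by
  have h' := congrArg (submatrix · e.symm e.symm) h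
  simpa [PreservesForm, ← submatrix_mul_equiv _ _ _ e.symm] using h'

variable [DecidableEq n]

theorem one (P : Matrix n n R) : PreservesForm P 1 := by
  simp [PreservesForm]

theorem neg_one (P : Matrix n n R) : PreservesForm P (-1) := by
  simp [PreservesForm]

theorem congr (hT : PreservesForm P T) (L : Matrix n n R) [Invertible L] :
    PreservesForm (Lᴴ * P * L) (⅟L * T * L) :=
  calc (⅟L * T * L)ᴴ * (Lᴴ * P * L) * (⅟L * T * L)
      = Lᴴ * Tᴴ * (L * ⅟L)ᴴ * P * (L * ⅟L) * T * L := by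
        simp only [conjTranspose_mul, Matrix.mul_assoc]
    _ = Lᴴ * (Tᴴ * P * T) * L := by
        simp [Matrix.mul_assoc]
    _ = Lᴴ * P * L := by rw [hT]

theorem isUnit [IsDedekindFiniteMonoid (Matrix n n R)] (hT : PreservesForm P T) (hP : IsUnit P) :
    IsUnit T := by
  let : Invertible P := hP.invertible
  have h : ⅟P * Tᴴ * P * T = 1 := by
    rw [Matrix.mul_assoc, Matrix.mul_assoc, ← Matrix.mul_assoc Tᴴ, hT, invOf_mul_self]
  exact IsUnit.of_mul_eq_one_right _ h

end PreservesForm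

section Extension

variable {R m n : Type*} [Ring R] [StarRing R] [Fintype m] [DecidableEq m] [Fintype n]

/-- The generalized reflection along the columns of `X`, for the form with Gram matrix `J`: for one
column and `k = -2 * (Xᴴ * J * X)⁻¹` it is the usual reflection. -/
def generalizedReflection [DecidableEq n] (J : Matrix n n R) (X : Matrix n m R) (k : Matrix m m R) :
    Matrix n n R :=
  1 + X * k * Xᴴ * J

theorem preservesForm_generalizedReflection [DecidableEq n] {J : Matrix n n R}
    (hJ : J.IsHermitian) {X : Matrix n m R} {S : Matrix m m R} [Invertible S]
    (hX : Xᴴ * J * X = -(S + Sᴴ)) :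
    PreservesForm J (generalizedReflection J X ⅟S) := by
  have hSS : (⅟S)ᴴ * Sᴴ = 1 := by
    rw [← conjTranspose_mul, mul_invOf_self, conjTranspose_one]
  have hcancel : ⅟S + (⅟S)ᴴ + (⅟S)ᴴ * (Xᴴ * J * X) * ⅟S = 0 := by
    rw [hX, Matrix.mul_neg, Matrix.mul_add, hSS, Matrix.neg_mul, Matrix.add_mul, Matrix.mul_assoc,
      mul_invOf_self, Matrix.mul_one, Matrix.one_mul]
    abel
  calc (1 + X * ⅟S * Xᴴ * J)ᴴ * J * (1 + X * ⅟S * Xᴴ * J)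
      = J + J * X * (⅟S + (⅟S)ᴴ + (⅟S)ᴴ * (Xᴴ * J * X) * ⅟S) * Xᴴ * J := by
        simp only [conjTranspose_add, conjTranspose_one, conjTranspose_mul,
          conjTranspose_conjTranspose, hJ.eq, Matrix.add_mul, Matrix.mul_add, Matrix.one_mul,
          Matrix.mul_one, Matrix.mul_assoc]
        abel
    _ = J := by simp [hcancel]

theorem exists_preservesForm_mul_eq {J : Matrix n n R} (hJ : J.IsHermitian) {V F : Matrix n m R}
    (hVF : Vᴴ * J * V = Fᴴ * J * F) (hu : IsUnit ((V - F)ᴴ * J * F)) :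
    ∃ W, PreservesForm J W ∧ W * F = V := by
  classical
  let : Invertible ((V - F)ᴴ * J * F) := hu.invertible
  refine ⟨generalizedReflection J (V - F) ⅟((V - F)ᴴ * J * F),
    preservesForm_generalizedReflection hJ ?_, ?_⟩
  · simp only [conjTranspose_sub, conjTranspose_mul, conjTranspose_conjTranspose, hJ.eq,
      Matrix.sub_mul, Matrix.mul_sub, ← Matrix.mul_assoc, hVF]
    abel
  · calc (1 + (V - F) * ⅟((V - F)ᴴ * J * F) * (V - F)ᴴ * J) * F
        = F + (V - F) * (⅟((V - F)ᴴ * J * F) * ((V - F)ᴴ * J * F)) := by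
          simp only [Matrix.add_mul, Matrix.one_mul, Matrix.mul_assoc]
      _ = V := by rw [invOf_mul_self, Matrix.mul_one, add_sub_cancel]

theorem exists_preservesForm_fromBlocks {P T A : Matrix m m R} {σ : Matrix n n R}
    {C : Matrix n m R} (hP : P.IsHermitian) (hσ : σ.IsHermitian)
    (hstein : P - Aᴴ * P * A = Cᴴ * σ * C) (hT : PreservesForm P T)
    (hu : IsUnit ((A - T)ᴴ * P * T)) :
    ∃ B D, PreservesForm (fromBlocks P 0 0 σ) (fromBlocks A B C D) := by
  classical
  obtain ⟨W, hW, hWT⟩ := exists_preservesForm_mul_eq (J := fromBlocks P 0 0 σ)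
    (V := fromRows A C) (F := fromRows T 0) (hP.fromBlocks conjTranspose_zero hσ)
    (by
      rw [PreservesForm] at hT
      simp [conjTranspose_fromRows_eq_fromCols_conjTranspose, fromCols_mul_fromBlocks,
        fromCols_mul_fromRows, hT, ← hstein])
    (by
      have hsub : fromRows A C - fromRows T 0 = fromRows (A - T) C := by
        ext (i | i) j <;> simp
      simpa [hsub, conjTranspose_fromRows_eq_fromCols_conjTranspose, fromCols_mul_fromBlocks,
        fromCols_mul_fromRows] using hu)
  refine ⟨W.toBlocks₁₂, W.toBlocks₂₂, ?_⟩
  have hWblocks : W * fromBlocks T 0 0 1 = fromBlocks A W.toBlocks₁₂ C W.toBlocks₂₂ := by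
    rw [← fromBlocks_toBlocks W, fromBlocks_mul_fromRows] at hWT
    obtain ⟨hA, hC⟩ := fromRows_inj hWT
    rw [← fromBlocks_toBlocks W, fromBlocks_multiply]
    simpa using And.intro hA hC
  exact hWblocks ▸ hW.mul (hT.fromBlocks (.one σ))

end Extension

/-- Every square matrix `A` admits an isometry `T` of `P` transverse to it: `A` and `T` agree on no
nonzero vector, which over a division ring is the invertibility of `A - T`. -/
def HasTransverseIsometries {R n : Type*} [Ring R] [StarRing R] [Fintype n] [DecidableEq n]
    (P : Matrix n n R) : Prop :=
  ∀ A, ∃ T, PreservesForm P T ∧ IsUnit (A - T)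

namespace HasTransverseIsometries

section Ring

variable {R m n : Type*} [Ring R] [StarRing R] [Fintype m] [DecidableEq m] [Fintype n]
  [DecidableEq n] {P : Matrix n n R}

theorem zero : HasTransverseIsometries (0 : Matrix n n R) :=
  fun A => ⟨A - 1, by simp [PreservesForm], by simp⟩

theorem congr (h : HasTransverseIsometries P) (L : Matrix n n R) [Invertible L] :
    HasTransverseIsometries (Lᴴ * P * L) := by
  intro A
  obtain ⟨T, hT, hu⟩ := h (L * A * ⅟L)
  refine ⟨⅟L * T * L, hT.congr L, ?_⟩
  have hA : A - ⅟L * T * L = ⅟L * (L * A * ⅟L - T) * L := by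
    simp [mul_sub, sub_mul, mul_assoc]
  rw [hA]
  exact ((isUnit_of_invertible _).mul hu).mul (isUnit_of_invertible L)

theorem of_congr (L : Matrix n n R) [Invertible L] (h : HasTransverseIsometries (Lᴴ * P * L)) :
    HasTransverseIsometries P := by
  have hL : (⅟L)ᴴ * Lᴴ = 1 := by
    rw [← conjTranspose_mul, mul_invOf_self, conjTranspose_one]
  simpa [← mul_assoc, hL, mul_assoc _ L] using h.congr ⅟L

theorem of_submatrix (e : m ≃ n) (h : HasTransverseIsometries (P.submatrix e e)) :
    HasTransverseIsometries P := by
  intro A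
  obtain ⟨T, hT, hu⟩ := h (A.submatrix e e)
  refine ⟨T.submatrix e.symm e.symm, hT.of_submatrix, ?_⟩
  simpa [submatrix_sub] using hu.map (reindexAlgEquiv ℤ R e)

theorem fromBlocks {Q : Matrix m m R} (hP : HasTransverseIsometries P)
    (hQ : HasTransverseIsometries Q) : HasTransverseIsometries (fromBlocks P 0 0 Q) := by
  intro A
  obtain ⟨T, hT, hTu⟩ := hP A.toBlocks₁₁
  let : Invertible (A.toBlocks₁₁ - T) := hTu.invertible
  obtain ⟨U, hU, hUu⟩ :=
    hQ (A.toBlocks₂₂ - A.toBlocks₂₁ * ⅟(A.toBlocks₁₁ - T) * A.toBlocks₁₂)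
  refine ⟨_, hT.fromBlocks hU, ?_⟩
  rw [← fromBlocks_toBlocks A, sub_eq_add_neg, fromBlocks_neg, fromBlocks_add]
  simp only [neg_zero, add_zero, ← sub_eq_add_neg]
  apply isUnit_fromBlocks_of_isUnit_schurComplement
  rwa [sub_right_comm]

theorem of_schurComplement {A : Matrix m m R} [Invertible A] {B : Matrix m n R}
    {D : Matrix n n R} (hA : A.IsHermitian) (h₁ : HasTransverseIsometries A)
    (h₂ : HasTransverseIsometries (D - Bᴴ * ⅟A * B)) :
    HasTransverseIsometries (Matrix.fromBlocks A B Bᴴ D) := by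
  let : Invertible (Matrix.fromBlocks 1 (⅟A * B) 0 1) :=
    (isUnit_fromBlocks_one_zero₂₁ (⅟A * B)).invertible
  have h := (h₁.fromBlocks h₂).congr (Matrix.fromBlocks 1 (⅟A * B) 0 1)
  rw [fromBlocks_eq_mul_schurComplement_mul]
  simpa [fromBlocks_conjTranspose, (isHermitian_invOf hA).eq] using h

end Ring

section DivisionRing

variable {K n : Type*} [DivisionRing K] [StarRing K] [NeZero (2 : K)] [Fintype n] [DecidableEq n]
  {P : Matrix n n K}

theorem of_subsingleton [Subsingleton n] (P : Matrix n n K) : HasTransverseIsometries P := by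
  intro A
  by_cases hA : ∃ i, A i i = 1
  · obtain ⟨i, hi⟩ := hA
    refine ⟨-1, .neg_one P, isUnit_of_apply_self_ne_zero fun j => ?_⟩
    obtain rfl := Subsingleton.elim i j
    simp [hi, one_add_one_eq_two, two_ne_zero]
  · push Not at hA
    exact ⟨1, .one P, isUnit_of_apply_self_ne_zero fun i => by simpa [sub_eq_zero] using hA i⟩

theorem of_apply_self_ne_zero (hP : P.IsHermitian) {j : n} (hj : P j j ≠ 0)
    (h : ∀ Q : Matrix {i // i ≠ j} {i // i ≠ j} K, Q.IsHermitian → HasTransverseIsometries Q) :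
    HasTransverseIsometries P := by
  let e : {i // i = j} ⊕ {i // i ≠ j} ≃ n := Equiv.sumCompl (· = j)
  apply of_submatrix e
  have hPe : (P.submatrix e e).IsHermitian := hP.submatrix e
  rw [← fromBlocks_toBlocks (P.submatrix e e)] at hPe ⊢
  obtain ⟨h₁₁, h₁₂, -, h₂₂⟩ := isHermitian_fromBlocks_iff.mp hPe
  have hu : IsUnit (P.submatrix e e).toBlocks₁₁ :=
    isUnit_of_apply_self_ne_zero fun ⟨i, hi⟩ => by simpa [e, toBlocks₁₁, hi] using hj
  let : Invertible (P.submatrix e e).toBlocks₁₁ := hu.invertible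
  rw [← h₁₂]
  refine of_schurComplement h₁₁ (of_subsingleton _) (h _ (h₂₂.sub ?_))
  exact isHermitian_conjTranspose_mul_mul _ (isHermitian_invOf h₁₁)

end DivisionRing

end HasTransverseIsometries

section Hermitian

variable {K : Type*} [DivisionRing K] [StarRing K] [NeZero (2 : K)]

theorem exists_isUnit_conjTranspose_mul_mul_apply_self_ne_zero {n : Type*} [Fintype n]
    [DecidableEq n] {P : Matrix n n K} (hP : P.IsHermitian) (hP0 : P ≠ 0) :
    ∃ L : Matrix n n K, IsUnit L ∧ ∃ j, (Lᴴ * P * L) j j ≠ 0 := by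
  by_contra! hdiag
  have hPdiag (i : n) : P i i = 0 := by simpa using hdiag 1 isUnit_one i
  obtain ⟨i, j, hij⟩ : ∃ i j, P i j ≠ 0 := by
    contrapose! hP0
    exact Matrix.ext hP0
  have hne : i ≠ j := fun h => hij (h ▸ hPdiag i)
  let E : Matrix n n K := single j i (P i j)⁻¹
  let L : Matrix n n K := 1 + E
  have hE : IsNilpotent E := ⟨2, by simp [E, sq, hne]⟩
  have hL : (Lᴴ * P * L) i i = 2 :=
    calc (Lᴴ * P * L) i i = star (P i j * (P i j)⁻¹) + P i j * (P i j)⁻¹ := by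
          simp [L, E, conjTranspose_single, add_mul, mul_add, hPdiag, hP.apply]
      _ = 2 := by rw [mul_inv_cancel₀ hij, star_one, one_add_one_eq_two]
  exact two_ne_zero (hL.symm.trans (hdiag L hE.isUnit_one_add i))

theorem hasTransverseIsometries_of_isHermitian {n : Type*} [Fintype n] [DecidableEq n]
    {P : Matrix n n K} (hP : P.IsHermitian) : HasTransverseIsometries P := by
  by_cases hP0 : P = 0
  · exact hP0 ▸ .zero
  obtain ⟨L, hL, j, hj⟩ := exists_isUnit_conjTranspose_mul_mul_apply_self_ne_zero hP hP0
  let : Invertible L := hL.invertible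
  exact .of_congr L <| .of_apply_self_ne_zero (isHermitian_conjTranspose_mul_mul _ hP) hj
    fun _ => hasTransverseIsometries_of_isHermitian
termination_by Fintype.card n
decreasing_by exact Fintype.card_subtype_lt (x := j) (by simp)

end Hermitian

theorem stein_unitary_completion_general {K m n : Type*} [DivisionRing K] [StarRing K]
    [NeZero (2 : K)] [Fintype m] [DecidableEq m] [Fintype n]
    {σ : Matrix n n K} (hσ : σ.IsHermitian) {A P : Matrix m m K} {C : Matrix n m K}
    (hP : P.IsHermitian) (hPu : IsUnit P) (hstein : P - Aᴴ * P * A = Cᴴ * σ * C) :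
    ∃ (B : Matrix m n K) (D : Matrix n n K),
      (fromBlocks A B C D)ᴴ * fromBlocks P 0 0 σ * fromBlocks A B C D = fromBlocks P 0 0 σ := by
  obtain ⟨T, hT, hAT⟩ := hasTransverseIsometries_of_isHermitian hP A
  exact exists_preservesForm_fromBlocks hP hσ hstein hT
    ((hAT.star.mul hPu).mul (hT.isUnit hPu))

/-- **Proposition**: given a signature matrix `σ`, an observable pair `(C, A)` and an
invertible Hermitian solution `P` of the Stein equation `P − A* P A = C* σ C`, there
exist `B`, `D` such that `W = [[A,B],[C,D]]` satisfies `W* diag(P,σ) W = diag(P,σ)`. -/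
theorem stein_unitary_completion {M N : ℕ}
    (σ : Matrix (Fin N) (Fin N) ℍ[ℝ]) (hσherm : σᴴ = σ) (hσinv : σ * σ = 1)
    (A : Matrix (Fin M) (Fin M) ℍ[ℝ]) (C : Matrix (Fin N) (Fin M) ℍ[ℝ])
    (hobs : ∀ v : Fin M → ℍ[ℝ], (∀ k : ℕ, (C * A ^ k).mulVec v = 0) → v = 0)
    (P : Matrix (Fin M) (Fin M) ℍ[ℝ]) (hP : Pᴴ = P) (hPinv : IsUnit P)
    (hstein : P - Aᴴ * P * A = Cᴴ * σ * C) :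
    ∃ (B : Matrix (Fin M) (Fin N) ℍ[ℝ]) (D : Matrix (Fin N) (Fin N) ℍ[ℝ]),
      (fromBlocks A B C D)ᴴ * fromBlocks P 0 0 σ * fromBlocks A B C D =
        fromBlocks P 0 0 σ := by
  have : CharZero ℍ[ℝ] := charZero_of_injective_algebraMap Quaternion.algebraMap_injective
  exact stein_unitary_completion_general hσherm hP hPinv hstein
end
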